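/- arXiv:1601.07345 — 2 statements merged into one kernel-verified Lean document; each statement's English description precedes it below -/
import Mathlib

section
/- Let p₁, p₂ : (0,∞)×(0,∞) → ℝ be differentiable pressure laws. Fix U = (α₁, m₁, m₂, q₁, q₂, Ē₁, Ē₂) ∈ ℝ⁷ with α₁ ∈ (0,1), m₁, m₂ > 0, and set α₂ = 1−α₁, ρ_k = m_k/α_k, u_k = q_k/m_k, e_k = Ē_k/m_k − q_k²/(2m_k²). Define the flux 𝓕 : V ↦ (0, m₁u₁, m₂u₂, m₁u₁² + α₁p₁(ρ₁,e₁), m₂u₂² + α₂p₂(ρ₂,e₂), (Ē₁+α₁p₁(ρ₁,e₁))u₁, (Ē₂+α₂p₂(ρ₂,e₂))u₂) (same formulas applied to a generic point V in a neighborhood of U), and let 𝓒(U) be the 7×7 matrix whose first column is (u₂, 0, 0, −p₁, p₁, −p₁u₂, p₁u₂) (with p₁ = p₁(ρ₁,e₁)) and all other columns zero. Then the characteristic polynomial of the 7×7 matrix A = D𝓕(U) + 𝓒(U) equals (X−u₂)²(X−u₁)((X−u₁)²−c₁²)((X−u₂)²−c₂²), where c_k² := ∂_ρ p_k(ρ_k,e_k)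 + (p_k(ρ_k,e_k)/ρ_k²) ∂_e p_k(ρ_k,e_k). In particular u₂ (with multiplicity two), u₁, and, when c_k² ≥ 0 with c_k = √(c_k²), u₁ ± c₁ and u₂ ± c₂ are the eigenvalues of A. -/
open Polynomial

noncomputable section

/-- The Baer-Nunziato flux `𝓕`, written in the conservative variables
`V = (α₁, α₁ρ₁, α₂ρ₂, α₁ρ₁u₁, α₂ρ₂u₂, α₁ρ₁E₁, α₂ρ₂E₂)`. -/
def BNflux (p₁ p₂ : ℝ → ℝ → ℝ) (V : Fin 7 → ℝ) : Fin 7 → ℝ :=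
  let α₁ := V 0
  let α₂ := 1 - V 0
  let ρ₁ := V 1 / α₁
  let ρ₂ := V 2 / α₂
  let u₁ := V 3 / V 1
  let u₂ := V 4 / V 2
  let e₁ := V 5 / V 1 - (V 3) ^ 2 / (2 * (V 1) ^ 2)
  let e₂ := V 6 / V 2 - (V 4) ^ 2 / (2 * (V 2) ^ 2)
  ![0,
    V 1 * u₁,
    V 2 * u₂,
    V 1 * u₁ ^ 2 + α₁ * p₁ ρ₁ e₁,
    V 2 * u₂ ^ 2 + α₂ * p₂ ρ₂ e₂,
    (V 5 + α₁ * p₁ ρ₁ e₁) * u₁,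
    (V 6 + α₂ * p₂ ρ₂ e₂) * u₂]

/-- The non-conservative matrix `𝓒(U)`: its first column is
`(u₂, 0, 0, −p₁, p₁, −p₁u₂, p₁u₂)` and all other columns vanish. -/
def BNnc (pv u₂ : ℝ) : Matrix (Fin 7) (Fin 7) ℝ :=
  Matrix.of fun i j =>
    if j = 0 then (![u₂, 0, 0, -pv, pv, -pv * u₂, pv * u₂] : Fin 7 → ℝ) i else 0

lemma bn_press_diff (p : ℝ → ℝ → ℝ) (f g : (Fin 7 → ℝ) → ℝ) (U : Fin 7 → ℝ)
    (hp : DifferentiableAt ℝ (fun q : ℝ × ℝ => p q.1 q.2) (f U, g U))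
    (hf : DifferentiableAt ℝ f U) (hg : DifferentiableAt ℝ g U) :
    DifferentiableAt ℝ (fun V => p (f V) (g V)) U :=
  DifferentiableAt.comp (f := fun V => (f V, g V)) U hp (hf.prodMk hg)

lemma bn_press_deriv (p : ℝ → ℝ → ℝ) (f g : ℝ → ℝ) (f' g' a b : ℝ)
    (hp : DifferentiableAt ℝ (fun q : ℝ × ℝ => p q.1 q.2) (a, b))
    (ha : f 0 = a) (hb : g 0 = b)
    (hf : HasDerivAt f f' 0) (hg : HasDerivAt g g' 0) :
    HasDerivAt (fun t => p (f t) (g t))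
      (deriv (fun r => p r b) a * f' + deriv (fun e => p a e) b * g') 0 := by
  subst ha hb
  have h := hp.hasFDerivAt
  have h1 : HasDerivAt (fun r => p r (g 0)) _ (f 0) :=
    HasFDerivAt.comp_hasDerivAt (f := fun r : ℝ => (r, g 0)) (f 0) h
      ((hasDerivAt_id (f 0)).prodMk (hasDerivAt_const (f 0) (g 0)))
  have h2 : HasDerivAt (fun e => p (f 0) e) _ (g 0) :=
    HasFDerivAt.comp_hasDerivAt (f := fun e : ℝ => (f 0, e)) (g 0) h
      ((hasDerivAt_const (g 0) (f 0)).prodMk (hasDerivAt_id (g 0)))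
  have h3 : HasDerivAt (fun t => p (f t) (g t)) _ 0 :=
    HasFDerivAt.comp_hasDerivAt (f := fun t : ℝ => (f t, g t)) 0 h (hf.prodMk hg)
  rw [h1.deriv, h2.deriv]
  convert h3 using 1
  have : ((f', g') : ℝ × ℝ) = f' • ((1 : ℝ), (0 : ℝ)) + g' • ((0 : ℝ), (1 : ℝ)) := by
    ext <;> simp
  rw [this, map_add, map_smul, map_smul]
  simp only [smul_eq_mul]
  ring

/-- Derivatives of the phasic mass, momentum and energy fluxes along a curve, together with
the characteristic coefficients of the resulting phasic block. -/
lemma bn_phase_deriv (p : ℝ → ℝ → ℝ) (a m q E ρ e u c : ℝ)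
    (ha : a ≠ 0) (hm : m ≠ 0)
    (hρ : ρ = m / a) (hu : u = q / m) (he : e = E / m - q ^ 2 / (2 * m ^ 2))
    (hp : DifferentiableAt ℝ (fun q : ℝ × ℝ => p q.1 q.2) (ρ, e))
    (hc : c = deriv (fun r => p r e) ρ + p ρ e / ρ ^ 2 * deriv (fun e => p ρ e) e) :
    ∃ z z' a1 a2 a3 a4 a5 a6 : ℝ,
    (a2 + a6 = 3 * u ∧ a2 * a6 - a3 * a5 - a1 = 3 * u ^ 2 - c ∧
      a1 * a6 - a3 * a4 = - u ^ 3 + u * c) ∧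
    ∀ (fa fm fq fE : ℝ → ℝ) (va vm vq vE : ℝ),
      fa 0 = a → fm 0 = m → fq 0 = q → fE 0 = E →
      HasDerivAt fa va 0 → HasDerivAt fm vm 0 → HasDerivAt fq vq 0 → HasDerivAt fE vE 0 →
      HasDerivAt (fun t => fm t * (fq t / fm t)) vq 0 ∧
      HasDerivAt (fun t => fm t * (fq t / fm t) ^ 2
        + fa t * p (fm t / fa t) (fE t / fm t - (fq t) ^ 2 / (2 * (fm t) ^ 2)))
        (z * va + a1 * vm + a2 * vq + a3 * vE) 0 ∧
      HasDerivAt (fun t => (fE t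
        + fa t * p (fm t / fa t) (fE t / fm t - (fq t) ^ 2 / (2 * (fm t) ^ 2))) * (fq t / fm t))
        (z' * va + a4 * vm + a5 * vq + a6 * vE) 0 := by
  obtain ⟨P, hP⟩ : ∃ P, P = p ρ e := ⟨_, rfl⟩
  obtain ⟨r, hr⟩ : ∃ r, r = deriv (fun r => p r e) ρ := ⟨_, rfl⟩
  obtain ⟨s, hs⟩ : ∃ s, s = deriv (fun e => p ρ e) e := ⟨_, rfl⟩
  rw [← hP, ← hr, ← hs] at hc
  refine ⟨P - r * m / a, u * (P - r * m / a),
    -u ^ 2 + r + a * s * (-E / m ^ 2 + q ^ 2 / m ^ 3), 2 * u - a * s * u / m, a * s / m,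
    -(E + a * P) * q / m ^ 2 + u * (r + a * s * (-E / m ^ 2 + q ^ 2 / m ^ 3)),
    (E + a * P) / m - u * a * s * q / m ^ 2, u * (1 + a * s / m), ⟨?_, ?_, ?_⟩, ?_⟩
  · ring
  · rw [hc, hρ, hu]; field_simp; ring
  · rw [hc, hρ, hu]; field_simp; ring
  intro fa fm fq fE va vm vq vE ea em eq eE da dm dq dE
  have em0 : fm 0 ≠ 0 := by rw [em]; exact hm
  have ea0 : fa 0 ≠ 0 := by rw [ea]; exact ha
  have em2 : 2 * (fm 0) ^ 2 ≠ 0 := by positivity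
  have du := dq.fun_div dm em0
  have dρ := dm.fun_div da ea0
  have de := (dE.fun_div dm em0).fun_sub
    ((dq.fun_pow 2).fun_div ((dm.fun_pow 2).const_mul (2 : ℝ)) em2)
  have dP := bn_press_deriv p _ _ _ _ ρ e hp (by simp only [ea, em, hρ])
    (by simp only [em, eq, eE, he]) dρ de
  have daP := da.fun_mul dP
  have v0 : p (fm 0 / fa 0) (fE 0 / fm 0 - (fq 0) ^ 2 / (2 * (fm 0) ^ 2)) = P := by
    rw [ea, em, eq, eE, hP, hρ, he]
  refine ⟨?_, ?_, ?_⟩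
  · refine (dm.fun_mul du).congr_deriv ?_
    rw [em, eq]; field_simp; ring
  · refine ((dm.fun_mul (du.fun_pow 2)).fun_add daP).congr_deriv ?_
    rw [v0, ← hr, ← hs, ea, em, eq, eE, hu]; norm_num; field_simp; ring
  · refine ((dE.fun_add daP).fun_mul du).congr_deriv ?_
    rw [v0, ← hr, ← hs, ea, em, eq, eE, hu]; norm_num; field_simp; ring

lemma bn_det (u z3 z4 z5 z6 a1 a2 a3 a4 a5 a6 b1 b2 b3 b4 b5 b6 : ℝ) :
    (!![u, 0, 0, 0, 0, 0, 0;
        0, 0, 0, 1, 0, 0, 0;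
        0, 0, 0, 0, 1, 0, 0;
        z3, a1, 0, a2, 0, a3, 0;
        z4, 0, b1, 0, b2, 0, b3;
        z5, a4, 0, a5, 0, a6, 0;
        z6, 0, b4, 0, b5, 0, b6] : Matrix (Fin 7) (Fin 7) ℝ).charpoly
      = (X - C u) *
        (X ^ 3 - C (a2 + a6) * X ^ 2 + C (a2 * a6 - a3 * a5 - a1) * X + C (a1 * a6 - a3 * a4)) *
        (X ^ 3 - C (b2 + b6) * X ^ 2 + C (b2 * b6 - b3 * b5 - b1) * X + C (b1 * b6 - b3 * b4)) := by
  have hM : (!![u, 0, 0, 0, 0, 0, 0;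
        0, 0, 0, 1, 0, 0, 0;
        0, 0, 0, 0, 1, 0, 0;
        z3, a1, 0, a2, 0, a3, 0;
        z4, 0, b1, 0, b2, 0, b3;
        z5, a4, 0, a5, 0, a6, 0;
        z6, 0, b4, 0, b5, 0, b6] : Matrix (Fin 7) (Fin 7) ℝ).charmatrix =
      !![X - C u, 0, 0, 0, 0, 0, 0;
        0, X, 0, -1, 0, 0, 0;
        0, 0, X, 0, -1, 0, 0;
        -C z3, -C a1, 0, X - C a2, 0, -C a3, 0;
        -C z4, 0, -C b1, 0, X - C b2, 0, -C b3;
        -C z5, -C a4, 0, -C a5, 0, X - C a6, 0;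
        -C z6, 0, -C b4, 0, -C b5, 0, X - C b6] := by
    ext1 i j
    fin_cases i <;> fin_cases j <;> simp
  rw [Matrix.charpoly, hM]
  have hbij : Function.Bijective
      (Sum.elim ![0, 1, 3, 5] ![2, 4, 6] : Fin 4 ⊕ Fin 3 → Fin 7) := by decide
  rw [← Matrix.det_submatrix_equiv_self (Equiv.ofBijective _ hbij)]
  have hB : ((!![X - C u, 0, 0, 0, 0, 0, 0;
        0, X, 0, -1, 0, 0, 0;
        0, 0, X, 0, -1, 0, 0;
        -C z3, -C a1, 0, X - C a2, 0, -C a3, 0;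
        -C z4, 0, -C b1, 0, X - C b2, 0, -C b3;
        -C z5, -C a4, 0, -C a5, 0, X - C a6, 0;
        -C z6, 0, -C b4, 0, -C b5, 0, X - C b6] : Matrix (Fin 7) (Fin 7) ℝ[X]).submatrix
          (Equiv.ofBijective _ hbij) (Equiv.ofBijective _ hbij)) =
      Matrix.fromBlocks
        !![X - C u, 0, 0, 0; 0, X, -1, 0; -C z3, -C a1, X - C a2, -C a3;
          -C z5, -C a4, -C a5, X - C a6] 0
        !![0, 0, 0, 0; -C z4, 0, 0, 0; -C z6, 0, 0, 0]
        !![X, -1, 0; -C b1, X - C b2, -C b3; -C b4, -C b5, X - C b6] := by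
    ext1 i j
    rcases i with i | i <;> rcases j with j | j <;> fin_cases i <;> fin_cases j <;> rfl
  rw [hB, Matrix.det_fromBlocks_zero₁₂, Matrix.det_fin_three]
  simp [Matrix.det_succ_row_zero, Fin.sum_univ_succ, Fin.succAbove]
  ring

set_option maxHeartbeats 2000000 in
/-- the characteristic polynomial of `A = D𝓕(U) + 𝓒(U)` equals
`(X−u₂)²(X−u₁)((X−u₁)²−c₁²)((X−u₂)²−c₂²)`, where
`c_k² = ∂_ρp_k + (p_k/ρ_k²)∂_ep_k`; in particular, when `c_k² ≥ 0`, the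
eigenvalues of `A` are `u₂`, `u₁`, `u₁ ± c₁` and `u₂ ± c₂`. -/
theorem bn_characteristic_polynomial
    (p₁ p₂ : ℝ → ℝ → ℝ)
    (hp₁ : ∀ ρ e : ℝ, 0 < ρ → 0 < e →
      DifferentiableAt ℝ (fun q : ℝ × ℝ => p₁ q.1 q.2) (ρ, e))
    (hp₂ : ∀ ρ e : ℝ, 0 < ρ → 0 < e →
      DifferentiableAt ℝ (fun q : ℝ × ℝ => p₂ q.1 q.2) (ρ, e))
    (U : Fin 7 → ℝ)
    (hα : 0 < U 0) (hα' : U 0 < 1) (hm₁ : 0 < U 1) (hm₂ : 0 < U 2)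
    (ρ₁ ρ₂ u₁ u₂ e₁ e₂ c₁sq c₂sq : ℝ)
    (hρ₁ : ρ₁ = U 1 / U 0) (hρ₂ : ρ₂ = U 2 / (1 - U 0))
    (hu₁ : u₁ = U 3 / U 1) (hu₂ : u₂ = U 4 / U 2)
    (he₁ : e₁ = U 5 / U 1 - (U 3) ^ 2 / (2 * (U 1) ^ 2))
    (he₂ : e₂ = U 6 / U 2 - (U 4) ^ 2 / (2 * (U 2) ^ 2))
    (he₁pos : 0 < e₁) (he₂pos : 0 < e₂)
    (hc₁ : c₁sq = deriv (fun r => p₁ r e₁) ρ₁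
        + p₁ ρ₁ e₁ / ρ₁ ^ 2 * deriv (fun e => p₁ ρ₁ e) e₁)
    (hc₂ : c₂sq = deriv (fun r => p₂ r e₂) ρ₂
        + p₂ ρ₂ e₂ / ρ₂ ^ 2 * deriv (fun e => p₂ ρ₂ e) e₂)
    (A : Matrix (Fin 7) (Fin 7) ℝ)
    (hA : A = LinearMap.toMatrix'
        ((fderiv ℝ (BNflux p₁ p₂) U : (Fin 7 → ℝ) →L[ℝ] (Fin 7 → ℝ))
          : (Fin 7 → ℝ) →ₗ[ℝ] (Fin 7 → ℝ))
        + BNnc (p₁ ρ₁ e₁) u₂) :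
    A.charpoly
        = (X - C u₂) ^ 2 * (X - C u₁)
          * ((X - C u₁) ^ 2 - C c₁sq) * ((X - C u₂) ^ 2 - C c₂sq)
    ∧ (0 ≤ c₁sq → 0 ≤ c₂sq →
        spectrum ℝ A
          = ({u₂, u₁, u₁ - Real.sqrt c₁sq, u₁ + Real.sqrt c₁sq,
              u₂ - Real.sqrt c₂sq, u₂ + Real.sqrt c₂sq} : Set ℝ)) := by
  have h1a : (1 : ℝ) - U 0 ≠ 0 := by linarith
  have hρ₁p : 0 < ρ₁ := by rw [hρ₁]; positivity
  have hρ₂p : 0 < ρ₂ := by rw [hρ₂]; exact div_pos hm₂ (by linarith)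
  have hP₁ := hp₁ ρ₁ e₁ hρ₁p he₁pos
  have hP₂ := hp₂ ρ₂ e₂ hρ₂p he₂pos
  have d0 : ∀ i : Fin 7, DifferentiableAt ℝ (fun V : Fin 7 → ℝ => V i) U := fun i => by fun_prop
  have m1 : U 1 ≠ 0 := hm₁.ne'
  have m2 : U 2 ≠ 0 := hm₂.ne'
  have a0 : U 0 ≠ 0 := hα.ne'
  have m1' : 2 * (U 1) ^ 2 ≠ 0 := by positivity
  have m2' : 2 * (U 2) ^ 2 ≠ 0 := by positivity
  have D1 : DifferentiableAt ℝ (fun V : Fin 7 → ℝ => p₁ (V 1 / V 0)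
      (V 5 / V 1 - (V 3) ^ 2 / (2 * (V 1) ^ 2))) U := by
    refine bn_press_diff p₁ _ _ U (by rw [hρ₁, he₁] at hP₁; exact hP₁) ?_ ?_ <;>
      fun_prop (disch := assumption)
  have D2 : DifferentiableAt ℝ (fun V : Fin 7 → ℝ => p₂ (V 2 / (1 - V 0))
      (V 6 / V 2 - (V 4) ^ 2 / (2 * (V 2) ^ 2))) U := by
    refine bn_press_diff p₂ _ _ U (by rw [hρ₂, he₂] at hP₂; exact hP₂) ?_ ?_ <;>
      fun_prop (disch := assumption)
  have DF : DifferentiableAt ℝ (BNflux p₁ p₂) U := by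
    rw [differentiableAt_pi]
    intro i
    have w1 : DifferentiableAt ℝ (fun V : Fin 7 → ℝ => V 3 / V 1) U := by
      fun_prop (disch := assumption)
    have w2 : DifferentiableAt ℝ (fun V : Fin 7 → ℝ => V 4 / V 2) U := by
      fun_prop (disch := assumption)
    have aP1 := (d0 0).fun_mul D1
    have aP2 := ((d0 0).const_sub 1).fun_mul D2
    fin_cases i
    · exact differentiableAt_const _
    · exact (d0 1).fun_mul w1
    · exact (d0 2).fun_mul w2
    · exact ((d0 1).fun_mul (w1.fun_pow 2)).fun_add aP1
    · exact ((d0 2).fun_mul (w2.fun_pow 2)).fun_add aP2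
    · exact ((d0 5).fun_add aP1).fun_mul w1
    · exact ((d0 6).fun_add aP2).fun_mul w2
  obtain ⟨z, z', a1, a2, a3, a4, a5, a6, ⟨ha, ha', ha''⟩, H1⟩ :=
    bn_phase_deriv p₁ (U 0) (U 1) (U 3) (U 5) ρ₁ e₁ u₁ c₁sq a0 m1 hρ₁ hu₁ he₁ hP₁ hc₁
  obtain ⟨y, y', b1, b2, b3, b4, b5, b6, ⟨hb, hb', hb''⟩, H2⟩ :=
    bn_phase_deriv p₂ (1 - U 0) (U 2) (U 4) (U 6) ρ₂ e₂ u₂ c₂sq h1a m2 hρ₂ hu₂ he₂ hP₂ hc₂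
  have key : ∀ v : Fin 7 → ℝ, fderiv ℝ (BNflux p₁ p₂) U v =
      ![0, v 3, v 4, z * v 0 + a1 * v 1 + a2 * v 3 + a3 * v 5,
        y * (-v 0) + b1 * v 2 + b2 * v 4 + b3 * v 6,
        z' * v 0 + a4 * v 1 + a5 * v 3 + a6 * v 5,
        y' * (-v 0) + b4 * v 2 + b5 * v 4 + b6 * v 6] := by
    intro v
    have hl : ∀ i, HasDerivAt (fun t : ℝ => U i + t * v i) (v i) 0 := fun i => by
      simpa using ((hasDerivAt_id (0 : ℝ)).mul_const (v i)).const_add (U i)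
    have hl0 : ∀ i, U i + 0 * v i = U i := fun i => by simp
    have hline : HasDerivAt (fun t : ℝ => (fun i => U i + t * v i : Fin 7 → ℝ)) v 0 :=
      hasDerivAt_pi.2 hl
    have hU : (fun i => U i + 0 * v i : Fin 7 → ℝ) = U := funext hl0
    have hcomp := HasFDerivAt.comp_hasDerivAt_of_eq (0 : ℝ) DF.hasFDerivAt hline hU.symm
    obtain ⟨k1, k2, k3⟩ := H1 _ _ _ _ _ _ _ _ (hl0 0) (hl0 1) (hl0 3) (hl0 5)
      (hl 0) (hl 1) (hl 3) (hl 5)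
    obtain ⟨l1, l2, l3⟩ := H2 (fun t => 1 - (U 0 + t * v 0)) _ _ _ _ _ _ _
      (by simp) (hl0 2) (hl0 4) (hl0 6)
      ((hl 0).const_sub 1) (hl 2) (hl 4) (hl 6)
    refine hcomp.unique (hasDerivAt_pi.2 fun i => ?_)
    fin_cases i
    · exact hasDerivAt_const _ _
    · exact k1
    · exact l1
    · exact k2
    · exact l2
    · exact k3
    · exact l3
  have hA' : A = !![u₂, 0, 0, 0, 0, 0, 0;
        0, 0, 0, 1, 0, 0, 0;
        0, 0, 0, 0, 1, 0, 0;
        z - p₁ ρ₁ e₁, a1, 0, a2, 0, a3, 0;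
        -y + p₁ ρ₁ e₁, 0, b1, 0, b2, 0, b3;
        z' - p₁ ρ₁ e₁ * u₂, a4, 0, a5, 0, a6, 0;
        -y' + p₁ ρ₁ e₁ * u₂, 0, b4, 0, b5, 0, b6] := by
    rw [hA]
    ext i j
    rw [Matrix.add_apply, LinearMap.toMatrix'_apply, ContinuousLinearMap.coe_coe, key]
    fin_cases i <;> fin_cases j <;> simp [BNnc, sub_eq_add_neg]
  have hchar : A.charpoly
        = (X - C u₂) ^ 2 * (X - C u₁)
          * ((X - C u₁) ^ 2 - C c₁sq) * ((X - C u₂) ^ 2 - C c₂sq) := by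
    rw [hA', bn_det, ha, ha', ha'', hb, hb', hb'']
    simp only [map_add, map_sub, map_mul, map_neg, map_pow, map_ofNat]
    ring
  refine ⟨hchar, fun h1 h2 => ?_⟩
  ext x
  rw [Matrix.mem_spectrum_iff_isRoot_charpoly, hchar]
  have e1 : ∀ w c : ℝ, 0 ≤ c → ((x - w) ^ 2 - c = 0 ↔ x = w - √c ∨ x = w + √c) := by
    intro w c hc
    have : (x - w) ^ 2 - c = (x - (w - √c)) * (x - (w + √c)) := by
      linear_combination Real.sq_sqrt hc
    rw [this, mul_eq_zero, sub_eq_zero, sub_eq_zero]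
  simp only [IsRoot.def, eval_mul, eval_pow, eval_sub, eval_X, eval_C, mul_eq_zero, e1 _ _ h1,
    e1 _ _ h2, pow_eq_zero_iff two_ne_zero, sub_eq_zero, Set.mem_insert_iff, Set.mem_singleton_iff]
  have hprop : ∀ a b c d f g : Prop, ((((a ∨ b) ∨ (c ∨ d)) ∨ (f ∨ g)) ↔ (a ∨ b ∨ c ∨ d ∨ f ∨ g)) := by
    clear * -
    intro a b c d f g
    simp only [or_assoc]
  exact hprop _ _ _ _ _ _
end
end

section
/- Let P₁, P₂ : (0,∞)×ℝ → ℝ be differentiable and a₁, a₂ > 0. Fix W = (α₁, m₁, m₂, q₁, q₂, S₁, S₂, 𝒯̄₁, 𝒯̄₂) ∈ ℝ⁹ with α₁ ∈ (0,1), m₁, m₂ > 0, and set α₂ = 1−α₁, ρ_k = m_k/α_k, τ_k = 1/ρ_k, u_k = q_k/m_k, s_k = S_k/m_k, 𝒯_k = 𝒯̄_k/m_k, π_k = P_k(𝒯_k,s_k) + a_k²(𝒯_k − τ_k). Define the flux g : V ↦ (0, m₁u₁, m₂u₂, m₁u₁² + α₁π₁, m₂u₂² + α₂π₂, S₁u₁,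 S₂u₂, 𝒯̄₁u₁, 𝒯̄₂u₂) (same formulas applied to a generic V near W) and let d(W) be the 9×9 matrix whose first column is (u₂, 0, 0, −π₁, π₁, 0, 0, 0, 0) and all other columns zero. Then the characteristic polynomial of the 9×9 matrix A = Dg(W) + d(W) equals (X−u₂)³(X−u₁)²((X−u₁)² − a₁²τ₁²)((X−u₂)² − a₂²τ₂²); in particular the eigenvalues of A are u₂ (multiplicity 3), u₁ (multiplicity 2), u₁ ± a₁τ₁ and u₂ ± a₂τ₂, all real. -/
open Polynomial

noncomputable section

/-- The flux `g` of the homogeneous Suliciu relaxation system for the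
Baer-Nunziato model, written in the conservative variables
`V = (α₁, α₁ρ₁, α₂ρ₂, α₁ρ₁u₁, α₂ρ₂u₂, α₁ρ₁s₁, α₂ρ₂s₂, α₁ρ₁𝒯₁, α₂ρ₂𝒯₂)`. -/
def relaxFlux (P₁ P₂ : ℝ → ℝ → ℝ) (a₁ a₂ : ℝ) (V : Fin 9 → ℝ) : Fin 9 → ℝ :=
  let α₁ := V 0
  let α₂ := 1 - V 0
  let τ₁ := α₁ / V 1
  let τ₂ := α₂ / V 2
  let u₁ := V 3 / V 1
  let u₂ := V 4 / V 2
  let s₁ := V 5 / V 1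
  let s₂ := V 6 / V 2
  let T₁ := V 7 / V 1
  let T₂ := V 8 / V 2
  let π₁ := P₁ T₁ s₁ + a₁ ^ 2 * (T₁ - τ₁)
  let π₂ := P₂ T₂ s₂ + a₂ ^ 2 * (T₂ - τ₂)
  ![0,
    V 1 * u₁,
    V 2 * u₂,
    V 1 * u₁ ^ 2 + α₁ * π₁,
    V 2 * u₂ ^ 2 + α₂ * π₂,
    V 5 * u₁,
    V 6 * u₂,
    V 7 * u₁,
    V 8 * u₂]

/-- The non-conservative matrix `d(W)`: its first column is
`(u₂, 0, 0, −π₁, π₁, 0, 0, 0, 0)` and all other columns vanish. -/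
def relaxNc (πv u₂ : ℝ) : Matrix (Fin 9) (Fin 9) ℝ :=
  Matrix.of fun i j =>
    if j = 0 then (![u₂, 0, 0, -πv, πv, 0, 0, 0, 0] : Fin 9 → ℝ) i else 0

def relaxAuxM (b0 u b2 b3 s T : ℝ) : Matrix (Fin 4) (Fin 4) ℝ :=
  !![0, 1, 0, 0; b0, 2 * u, b2, b3; -(s * u), s, u, 0; -(T * u), T, 0, u]

def relaxAuxJ (c3 c4 b0 u b2 b3 s T b0' u' b2' b3' s' T' : ℝ) : Matrix (Fin 9) (Fin 9) ℝ :=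
  !![0, 0, 0, 0, 0, 0, 0, 0, 0;
    0, 0, 0, 1, 0, 0, 0, 0, 0;
    0, 0, 0, 0, 1, 0, 0, 0, 0;
    c3, b0, 0, 2 * u, 0, b2, 0, b3, 0;
    c4, 0, b0', 0, 2 * u', 0, b2', 0, b3';
    0, -(s * u), 0, s, 0, u, 0, 0, 0;
    0, 0, -(s' * u'), 0, s', 0, u', 0, 0;
    0, -(T * u), 0, T, 0, 0, 0, u, 0;
    0, 0, -(T' * u'), 0, T', 0, 0, 0, u']

theorem relaxAux_charpoly4 (u s T b0 b2 b3 c : ℝ) (h : b0 + s * b2 + T * b3 = c - u ^ 2) :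
    (relaxAuxM b0 u b2 b3 s T).charpoly
      = (X - C u) ^ 2 * ((X - C u) ^ 2 - C c) := by
  have hc : c = b0 + s * b2 + T * b3 + u ^ 2 := by linarith
  subst hc
  rw [relaxAuxM, Matrix.charpoly, Matrix.charmatrix]
  simp [Matrix.det_succ_row_zero, Fin.sum_univ_succ, Fin.succAbove, Matrix.diagonal, Matrix.scalar_apply]
  have : (C 2 : ℝ[X]) = 2 := rfl
  try rw [this]
  ring

theorem relaxAux_div {E : Type*} [NormedAddCommGroup E] [NormedSpace ℝ E]
    (q m : E → ℝ) (q' m' : E →L[ℝ] ℝ) (W : E)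
    (hq : HasFDerivAt q q' W) (hm : HasFDerivAt m m' W) (h0 : m W ≠ 0) :
    HasFDerivAt (fun V => q V / m V)
      (q W • ((-(m W ^ 2)⁻¹) • m') + (m W)⁻¹ • q') W := by
  simp only [div_eq_mul_inv]
  exact hq.mul ((hasDerivAt_inv h0).comp_hasFDerivAt W hm)

theorem relaxAux_mom {E : Type*} [NormedAddCommGroup E] [NormedSpace ℝ E] (P : ℝ → ℝ → ℝ) (a : ℝ)
    (α m q S T : E → ℝ) (α' m' q' S' T' : E →L[ℝ] ℝ) (W : E)
    (hα : HasFDerivAt α α' W) (hm : HasFDerivAt m m' W) (hq : HasFDerivAt q q' W)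
    (hS : HasFDerivAt S S' W) (hT : HasFDerivAt T T' W) (h0 : m W ≠ 0)
    (L : ℝ × ℝ →L[ℝ] ℝ)
    (hP : HasFDerivAt (fun q : ℝ × ℝ => P q.1 q.2) L (T W / m W, S W / m W))
    (D : E →L[ℝ] ℝ)
    (hD : ∀ v, D v = α' v * (P (T W / m W) (S W / m W) + a ^ 2 * (T W / m W - α W / m W)
        - a ^ 2 * (α W / m W))
      + m' v * (-(q W / m W) ^ 2 - (α W / m W) * ((T W / m W) * L (1, 0) + (S W / m W) * L (0, 1))
          - a ^ 2 * (α W / m W) * (T W / m W - α W / m W))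
      + q' v * (2 * (q W / m W)) + S' v * ((α W / m W) * L (0, 1))
      + T' v * ((α W / m W) * (L (1, 0) + a ^ 2))) :
    HasFDerivAt (fun V => m V * (q V / m V) ^ 2
      + α V * (P (T V / m V) (S V / m V) + a ^ 2 * (T V / m V - α V / m V))) D W := by
  have hu := relaxAux_div _ _ _ _ W hq hm h0
  have hτ := relaxAux_div _ _ _ _ W hα hm h0
  have hTm := relaxAux_div _ _ _ _ W hT hm h0
  have hSm := relaxAux_div _ _ _ _ W hS hm h0
  have hL : ∀ x y : ℝ, L (x, y) = x * L (1, 0) + y * L (0, 1) := by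
    intro x y
    have : ((x, y) : ℝ × ℝ) = x • (1, 0) + y • (0, 1) := by simp
    rw [this, map_add, map_smul, map_smul]; simp
  have hPP0 := HasFDerivAt.comp (f := fun V => (T V / m V, S V / m V)) W hP (hTm.prodMk hSm)
  have hPP : HasFDerivAt (fun V => P (T V / m V) (S V / m V)) (L (1, 0) • (T W • ((-(m W ^ 2)⁻¹) • m') + (m W)⁻¹ • T') + L (0, 1) • (S W • ((-(m W ^ 2)⁻¹) • m') + (m W)⁻¹ • S')) W := by
    refine HasFDerivAt.congr_fderiv hPP0 ?_
    ext v
    change L ((T W • ((-(m W ^ 2)⁻¹) • m') + (m W)⁻¹ • T') v, (S W • ((-(m W ^ 2)⁻¹) • m') + (m W)⁻¹ • S') v) = _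
    rw [hL]
    simp only [add_apply, smul_apply, smul_eq_mul]
    ring
  have key := (hm.mul (hu.pow 2)).add (hα.mul (hPP.add ((hTm.sub hτ).const_mul (a ^ 2))))
  refine HasFDerivAt.congr_fderiv key ?_
  ext v
  rw [hD]
  simp
  field_simp
  ring

theorem relaxAux_adv {E : Type*} [NormedAddCommGroup E] [NormedSpace ℝ E]
    (m q S : E → ℝ) (m' q' S' : E →L[ℝ] ℝ) (W : E)
    (hm : HasFDerivAt m m' W) (hq : HasFDerivAt q q' W)
    (hS : HasFDerivAt S S' W) (h0 : m W ≠ 0)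
    (D : E →L[ℝ] ℝ)
    (hD : ∀ v, D v = m' v * (-((S W / m W) * (q W / m W)))
      + q' v * (S W / m W) + S' v * (q W / m W)) :
    HasFDerivAt (fun V => S V * (q V / m V)) D W := by
  have hu := relaxAux_div _ _ _ _ W hq hm h0
  refine HasFDerivAt.congr_fderiv (hS.mul hu) ?_
  ext v
  rw [hD]
  simp
  field_simp

def relaxAuxEquiv : Fin 9 ≃ Fin 1 ⊕ (Fin 4 ⊕ Fin 4) where
  toFun := ![.inl 0, .inr (.inl 0), .inr (.inr 0), .inr (.inl 1), .inr (.inr 1),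
    .inr (.inl 2), .inr (.inr 2), .inr (.inl 3), .inr (.inr 3)]
  invFun := Sum.elim ![0] (Sum.elim ![1, 3, 5, 7] ![2, 4, 6, 8])
  left_inv := by decide
  right_inv := by decide

theorem relaxAux_charpoly9 (p w c3 c4 b0 u b2 b3 s T b0' u' b2' b3' s' T' : ℝ) :
    (relaxAuxJ c3 c4 b0 u b2 b3 s T b0' u' b2' b3' s' T' + relaxNc p w).charpoly
      = (X - C w) * ((relaxAuxM b0 u b2 b3 s T).charpoly
        * (relaxAuxM b0' u' b2' b3' s' T').charpoly) := by
  have hN : ∀ i j, j ≠ 0 → (relaxAuxJ c3 c4 b0 u b2 b3 s T b0' u' b2' b3' s' T'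
      + relaxNc p w) i j = relaxAuxJ c3 c4 b0 u b2 b3 s T b0' u' b2' b3' s' T' i j := by
    intro i j hj
    rw [Matrix.add_apply, relaxNc, Matrix.of_apply, if_neg hj, add_zero]
  have h00 : (relaxAuxJ c3 c4 b0 u b2 b3 s T b0' u' b2' b3' s' T' + relaxNc p w) 0 0 = w := by
    rw [Matrix.add_apply, relaxNc, Matrix.of_apply, if_pos rfl]
    exact zero_add w
  generalize relaxAuxJ c3 c4 b0 u b2 b3 s T b0' u' b2' b3' s' T' + relaxNc p w = A at hN h00 ⊢
  have hblock : Matrix.reindex relaxAuxEquiv relaxAuxEquiv A =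
      Matrix.fromBlocks (Matrix.of fun _ _ => w) 0
        (Matrix.of fun i _ => A (relaxAuxEquiv.symm (Sum.inr i)) 0)
        (Matrix.fromBlocks (relaxAuxM b0 u b2 b3 s T) 0 0
          (relaxAuxM b0' u' b2' b3' s' T')) := by
    ext i j
    rcases j with j | j | j
    · rcases i with i | i
      · fin_cases i
        fin_cases j
        exact h00
      · fin_cases j
        rfl
    · rw [Matrix.reindex_apply, Matrix.submatrix_apply, hN _ _ (by revert j; decide)]
      rcases i with i | i | i <;> fin_cases i <;> fin_cases j <;> rfl
    · rw [Matrix.reindex_apply, Matrix.submatrix_apply, hN _ _ (by revert j; decide)]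
      rcases i with i | i | i <;> fin_cases i <;> fin_cases j <;> rfl
  rw [← Matrix.charpoly_reindex relaxAuxEquiv A, hblock, Matrix.charpoly_fromBlocks_zero₁₂,
    Matrix.charpoly_fromBlocks_zero₁₂]
  have : (Matrix.of fun _ _ => w : Matrix (Fin 1) (Fin 1) ℝ).charpoly = X - C w := by
    simp [Matrix.charpoly, Matrix.charmatrix]
  rw [this]

set_option maxHeartbeats 1000000 in
/-- the characteristic polynomial of `A = Dg(W) + d(W)` for the
relaxation system equals
`(X−u₂)³(X−u₁)²((X−u₁)² − a₁²τ₁²)((X−u₂)² − a₂²τ₂²)`; in particular the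
eigenvalues of `A` are `u₂` (multiplicity 3), `u₁` (multiplicity 2),
`u₁ ± a₁τ₁` and `u₂ ± a₂τ₂`, all real. -/
theorem relax_characteristic_polynomial
    (P₁ P₂ : ℝ → ℝ → ℝ) (a₁ a₂ : ℝ) (ha₁ : 0 < a₁) (ha₂ : 0 < a₂)
    (W : Fin 9 → ℝ)
    (hα : 0 < W 0) (hα' : W 0 < 1) (hm₁ : 0 < W 1) (hm₂ : 0 < W 2)
    (τ₁ τ₂ u₁ u₂ s₁ s₂ T₁ T₂ π₁ π₂ : ℝ)
    (hτ₁ : τ₁ = W 0 / W 1) (hτ₂ : τ₂ = (1 - W 0) / W 2)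
    (hu₁ : u₁ = W 3 / W 1) (hu₂ : u₂ = W 4 / W 2)
    (hs₁ : s₁ = W 5 / W 1) (hs₂ : s₂ = W 6 / W 2)
    (hT₁ : T₁ = W 7 / W 1) (hT₂ : T₂ = W 8 / W 2)
    (hπ₁ : π₁ = P₁ T₁ s₁ + a₁ ^ 2 * (T₁ - τ₁))
    (hπ₂ : π₂ = P₂ T₂ s₂ + a₂ ^ 2 * (T₂ - τ₂))
    (hP₁ : DifferentiableAt ℝ (fun q : ℝ × ℝ => P₁ q.1 q.2) (T₁, s₁))
    (hP₂ : DifferentiableAt ℝ (fun q : ℝ × ℝ => P₂ q.1 q.2) (T₂, s₂))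
    (A : Matrix (Fin 9) (Fin 9) ℝ)
    (hA : A = LinearMap.toMatrix'
        ((fderiv ℝ (relaxFlux P₁ P₂ a₁ a₂) W : (Fin 9 → ℝ) →L[ℝ] (Fin 9 → ℝ))
          : (Fin 9 → ℝ) →ₗ[ℝ] (Fin 9 → ℝ))
        + relaxNc π₁ u₂) :
    A.charpoly
        = (X - C u₂) ^ 3 * (X - C u₁) ^ 2
          * ((X - C u₁) ^ 2 - C ((a₁ * τ₁) ^ 2))
          * ((X - C u₂) ^ 2 - C ((a₂ * τ₂) ^ 2))
    ∧ spectrum ℝ A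
        = ({u₂, u₁, u₁ - a₁ * τ₁, u₁ + a₁ * τ₁,
            u₂ - a₂ * τ₂, u₂ + a₂ * τ₂} : Set ℝ) := by
  have h1 : W 1 ≠ 0 := hm₁.ne'
  have h2 : W 2 ≠ 0 := hm₂.ne'
  obtain ⟨L₁, hL₁⟩ := hP₁
  obtain ⟨L₂, hL₂⟩ := hP₂
  set J : Matrix (Fin 9) (Fin 9) ℝ := relaxAuxJ (π₁ - a₁ ^ 2 * τ₁) (-(π₂ - a₂ ^ 2 * τ₂))
    (-u₁ ^ 2 - τ₁ * (T₁ * L₁ (1, 0) + s₁ * L₁ (0, 1)) - a₁ ^ 2 * τ₁ * (T₁ - τ₁)) u₁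
      (τ₁ * L₁ (0, 1)) (τ₁ * (L₁ (1, 0) + a₁ ^ 2)) s₁ T₁
    (-u₂ ^ 2 - τ₂ * (T₂ * L₂ (1, 0) + s₂ * L₂ (0, 1)) - a₂ ^ 2 * τ₂ * (T₂ - τ₂)) u₂
      (τ₂ * L₂ (0, 1)) (τ₂ * (L₂ (1, 0) + a₂ ^ 2)) s₂ T₂ with hJ
  have hp : ∀ i : Fin 9, HasFDerivAt (fun V : Fin 9 → ℝ => V i)
      (ContinuousLinearMap.proj (R := ℝ) (φ := fun _ : Fin 9 => ℝ) i) W :=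
    fun i => hasFDerivAt_apply i W
  have hder : HasFDerivAt (relaxFlux P₁ P₂ a₁ a₂)
      (LinearMap.toContinuousLinearMap (Matrix.toLin' J)) W := by
    refine hasFDerivAt_pi'' fun i => ?_
    have hJv : ∀ v : Fin 9 → ℝ, ((ContinuousLinearMap.proj (R := ℝ) (φ := fun _ : Fin 9 => ℝ) i).comp
        (LinearMap.toContinuousLinearMap (Matrix.toLin' J))) v = ∑ j, J i j * v j := by
      intro v
      simp [Matrix.mulVec, dotProduct]
    generalize (ContinuousLinearMap.proj (R := ℝ) (φ := fun _ : Fin 9 => ℝ) i).comp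
        (LinearMap.toContinuousLinearMap (Matrix.toLin' J)) = D at hJv ⊢
    subst hτ₁ hτ₂ hu₁ hu₂ hs₁ hs₂ hT₁ hT₂ hπ₁ hπ₂
    fin_cases i
    · refine HasFDerivAt.congr_fderiv (hasFDerivAt_const (0 : ℝ) W) ?_
      ext v
      rw [hJv]
      simp [hJ, relaxAuxJ, Fin.sum_univ_succ]
    · refine relaxAux_adv (fun V => V 1) (fun V => V 3) (fun V => V 1) _ _ _ W (hp 1) (hp 3) (hp 1) h1 D ?_
      intro v
      rw [hJv]
      simp [hJ, relaxAuxJ, Fin.sum_univ_succ, div_self h1]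
    · refine relaxAux_adv (fun V => V 2) (fun V => V 4) (fun V => V 2) _ _ _ W (hp 2) (hp 4) (hp 2) h2 D ?_
      intro v
      rw [hJv]
      simp [hJ, relaxAuxJ, Fin.sum_univ_succ, div_self h2]
    · refine relaxAux_mom P₁ a₁ (fun V => V 0) (fun V => V 1) (fun V => V 3) (fun V => V 5) (fun V => V 7)
        _ _ _ _ _ W (hp 0) (hp 1) (hp 3) (hp 5) (hp 7) h1 L₁ hL₁ D ?_
      intro v
      rw [hJv]
      simp [hJ, relaxAuxJ, Fin.sum_univ_succ]
      ring
    · refine relaxAux_mom P₂ a₂ (fun V => 1 - V 0) (fun V => V 2) (fun V => V 4) (fun V => V 6) (fun V => V 8)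
        _ _ _ _ _ W ((hp 0).const_sub 1) (hp 2) (hp 4) (hp 6) (hp 8) h2 L₂ hL₂ D ?_
      intro v
      rw [hJv]
      simp [hJ, relaxAuxJ, Fin.sum_univ_succ]
      ring
    · refine relaxAux_adv (fun V => V 1) (fun V => V 3) (fun V => V 5) _ _ _ W (hp 1) (hp 3) (hp 5) h1 D ?_
      intro v
      rw [hJv]
      simp [hJ, relaxAuxJ, Fin.sum_univ_succ]
      ring
    · refine relaxAux_adv (fun V => V 2) (fun V => V 4) (fun V => V 6) _ _ _ W (hp 2) (hp 4) (hp 6) h2 D ?_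
      intro v
      rw [hJv]
      simp [hJ, relaxAuxJ, Fin.sum_univ_succ]
      ring
    · refine relaxAux_adv (fun V => V 1) (fun V => V 3) (fun V => V 7) _ _ _ W (hp 1) (hp 3) (hp 7) h1 D ?_
      intro v
      rw [hJv]
      simp [hJ, relaxAuxJ, Fin.sum_univ_succ]
      ring
    · refine relaxAux_adv (fun V => V 2) (fun V => V 4) (fun V => V 8) _ _ _ W (hp 2) (hp 4) (hp 8) h2 D ?_
      intro v
      rw [hJv]
      simp [hJ, relaxAuxJ, Fin.sum_univ_succ]
      ring
  have hAJ : A = J + relaxNc π₁ u₂ := by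
    rw [hA, hder.fderiv]
    congr 1
    exact LinearMap.toMatrix'_toLin' J
  have hchar : A.charpoly
        = (X - C u₂) ^ 3 * (X - C u₁) ^ 2
          * ((X - C u₁) ^ 2 - C ((a₁ * τ₁) ^ 2))
          * ((X - C u₂) ^ 2 - C ((a₂ * τ₂) ^ 2)) := by
    rw [hAJ, hJ, relaxAux_charpoly9, relaxAux_charpoly4 _ _ _ _ _ _ ((a₁ * τ₁) ^ 2) (by ring),
      relaxAux_charpoly4 _ _ _ _ _ _ ((a₂ * τ₂) ^ 2) (by ring)]
    ring
  refine ⟨hchar, ?_⟩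
  ext r
  rw [Matrix.mem_spectrum_iff_isRoot_charpoly, hchar]
  have e1 : (r - u₁) ^ 2 - (a₁ * τ₁) ^ 2 = (r - (u₁ - a₁ * τ₁)) * (r - (u₁ + a₁ * τ₁)) := by ring
  have e2 : (r - u₂) ^ 2 - (a₂ * τ₂) ^ 2 = (r - (u₂ - a₂ * τ₂)) * (r - (u₂ + a₂ * τ₂)) := by ring
  simp only [IsRoot.def, eval_mul, eval_pow, eval_sub, eval_X, eval_C, e1, e2, mul_eq_zero,
    pow_eq_zero_iff, ne_eq, OfNat.ofNat_ne_zero, not_false_eq_true, sub_eq_zero,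
    Set.mem_insert_iff, Set.mem_singleton_iff]
  clear * -
  grind
end
end
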